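/- arXiv:0707.0649 — 2 statements merged into one kernel-verified Lean document; each statement's English description precedes it below -/
import Mathlib

section
/- Let m > 0, let N ≥ 1 and L ≥ 1 be integers, and let γ₁, …, γ_N be independent random variables each with density p_γ(x) = m^m x^(m−1) e^(−m x)/Γ(m) on (0, ∞). Define R(γ)² = (1/π)·Γ(N/2 + 1)^(2/N)·(∏_{n=1}^N γ_n)^(1/N) and, for ρ > 0, the sphere lower bound P_slb(ρ) = 1 − E[(1 − Γ̄(N/2, R(γ)²ρ/2))^L], where Γ̄(a, x) = (1/Γ(a)) ∫_x^∞ t^(a−1) e^(−t) dt is the normalized upper incomplete Gamma function. Then the diversity order of the sphere lower bound equals mN for every L ≥ 1; that is, lim_{ρ→∞} (− log P_slb(ρ) / log ρ) = mN. -/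
open MeasureTheory ProbabilityTheory Real Set Filter

/-- The normalized upper incomplete Gamma function
`Γ̄(a, x) = (1/Γ(a)) ∫_x^∞ t^(a−1) e^(−t) dt`. -/
noncomputable def normGammaBar (a x : ℝ) : ℝ :=
  (∫ t in Set.Ioi x, t ^ (a - 1) * Real.exp (-t)) / Real.Gamma a

/-- The density `p_γ(x) = m^m x^(m−1) e^(−m x)/Γ(m)` on `(0, ∞)` of the squared
Nakagami-`m` fading power gain. -/
noncomputable def nakagamiPowerDensity (m : ℝ) : ℝ → ℝ := fun x =>
  if 0 < x then m ^ m * x ^ (m - 1) * Real.exp (-m * x) / Real.Gamma m else 0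

/-!
For `0 ≤ x`, `normGammaBar a (r * x)` is the tail of the gamma law with shape `a` and rate `r`, and
the law of each `γ i` is the gamma law with shape and rate `m`. Hence the sphere lower bound has the
form `E[F(G ρ)]`, where `G` is the geometric mean of the fading gains and the antitone function `F`
decays faster than every power. Such an expectation sees only the lower tail of `G`: on the event
`G ≤ 1 / ρ` the integrand is at least `F 1`, and conversely `F x ≤ A x ^ (-s)` bounds the
expectation by `A E[G ^ (-s)] ρ ^ (-s)`. Finally, `P(γ i ≤ ε) ≳ ε ^ m` and `E[γ i ^ (-s)] < ∞` for
`s < m`. Independent products preserve both properties with the same exponent `m`, and the `N`-th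
root multiplies the exponent by `N`.
-/

open Asymptotics Topology

lemma eventually_log_div_log_le_of_isBigO {f g : ℝ → ℝ} (hfg : f =O[atTop] g)
    (hf : ∀ᶠ ρ in atTop, f ρ ≠ 0) {ε : ℝ} (hε : 0 < ε) :
    ∀ᶠ ρ in atTop, log (f ρ) / log ρ ≤ log (g ρ) / log ρ + ε := by
  obtain ⟨C, hC, hbound⟩ := hfg.exists_pos
  filter_upwards [hbound.bound, hf, eventually_gt_atTop 1,
    (tendsto_log_atTop.eventually_ge_atTop (log C / ε))] with ρ hle hne hρ hlog
  have hlogρ : 0 < log ρ := log_pos hρ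
  have hg : g ρ ≠ 0 := fun h ↦ hne (by simpa [h] using hle)
  have hlogle : log (f ρ) ≤ log C + log (g ρ) := by
    rw [← log_abs (f ρ), ← log_abs (g ρ), ← log_mul hC.ne' (abs_pos.2 hg).ne']
    exact log_le_log (abs_pos.2 hne) hle
  have hlogC : log C ≤ ε * log ρ := (div_le_iff₀' hε).1 hlog
  rw [div_add' _ _ _ hlogρ.ne']
  gcongr
  linarith

lemma log_rpow_div_log {ρ : ℝ} (hρ : 1 < ρ) (s : ℝ) : log (ρ ^ s) / log ρ = s := by
  rw [log_rpow (by linarith), mul_div_cancel_right₀ _ (log_pos hρ).ne']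

/-- `P` has diversity order `d` when it decays like `ρ ^ (-d)` on the logarithmic scale as the
signal-to-noise ratio `ρ` tends to infinity. -/
def HasDiversityOrder (P : ℝ → ℝ) (d : ℝ) : Prop :=
  Tendsto (fun ρ ↦ -log (P ρ) / log ρ) atTop (𝓝 d)

namespace HasDiversityOrder

variable {P Q : ℝ → ℝ} {d : ℝ}

lemma congr' (hP : HasDiversityOrder P d) (h : P =ᶠ[atTop] Q) : HasDiversityOrder Q d :=
  Tendsto.congr' (h.mono fun ρ hρ ↦ by rw [hρ]) hP

lemma of_isBigO (hd : 0 < d)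
    (hlower : (fun ρ ↦ ρ ^ (-d)) =O[atTop] P)
    (hupper : ∀ s ∈ Ioo 0 d, P =O[atTop] fun ρ ↦ ρ ^ (-s)) :
    HasDiversityOrder P d := by
  have hpow : ∀ᶠ ρ : ℝ in atTop, ρ ^ (-d) ≠ 0 := by
    filter_upwards [eventually_gt_atTop 0] with ρ hρ
    positivity
  have hP : ∀ᶠ ρ in atTop, P ρ ≠ 0 := by
    filter_upwards [hlower.eq_zero_imp, hpow] with ρ h hρ hzero using hρ (h hzero)
  refine tendsto_order.2 ⟨fun b hb ↦ ?_, fun b hb ↦ ?_⟩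
  · obtain ⟨s, hs, hsd⟩ := exists_between (max_lt hb hd)
    obtain ⟨hbs, hs0⟩ := max_lt_iff.1 hs
    filter_upwards [eventually_log_div_log_le_of_isBigO (hupper s ⟨hs0, hsd⟩) hP
      (half_pos (sub_pos.2 hbs)), eventually_gt_atTop 1] with ρ hle hρ
    rw [log_rpow_div_log hρ] at hle
    rw [neg_div]
    linarith
  · filter_upwards [eventually_log_div_log_le_of_isBigO hlower hpow (half_pos (sub_pos.2 hb)),
      eventually_gt_atTop 1] with ρ hle hρ
    rw [log_rpow_div_log hρ] at hle
    rw [neg_div]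
    linarith

end HasDiversityOrder

lemma tendsto_rpow_nhdsGT_zero {q : ℝ} (hq : 0 < q) :
    Tendsto (fun x : ℝ ↦ x ^ q) (𝓝[>] 0) (𝓝[>] 0) := by
  refine tendsto_nhdsWithin_iff.2 ⟨?_, ?_⟩
  · simpa [zero_rpow hq.ne'] using
      (continuousAt_rpow_const 0 q (Or.inr hq.le)).tendsto.mono_left nhdsWithin_le_nhds
  · filter_upwards [self_mem_nhdsWithin] with x hx using rpow_pos_of_pos hx q

/-- The random variable `X` is positive and has lower tail `P(X ≤ ε) ≈ ε ^ d` at `0`. The upper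
half of this estimate is encoded by finiteness of the negative moments of order less than `d`,
which tolerates logarithmic corrections and is stable under independent products. -/
structure HasLowerTailOrder {Ω : Type*} [MeasurableSpace Ω] (X : Ω → ℝ) (μ : Measure Ω)
    (d : ℝ) : Prop where
  aemeasurable : AEMeasurable X μ
  ae_pos : ∀ᵐ ω ∂μ, 0 < X ω
  rpow_isBigO : (fun ε ↦ ε ^ d) =O[𝓝[>] 0] fun ε ↦ μ.real {ω | X ω ≤ ε}
  integrable_rpow_neg : ∀ s ∈ Ioo 0 d, Integrable (fun ω ↦ X ω ^ (-s)) μ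

namespace HasLowerTailOrder

variable {Ω : Type*} [MeasurableSpace Ω] {μ : Measure Ω} {X : Ω → ℝ} {d : ℝ}

lemma of_map (hX : AEMeasurable X μ) (h : HasLowerTailOrder id (μ.map X) d) :
    HasLowerTailOrder X μ d where
  aemeasurable := hX
  ae_pos := ae_of_ae_map hX h.ae_pos
  rpow_isBigO := by
    simpa only [measureReal_def, Measure.map_apply_of_aemeasurable hX measurableSet_Iic,
      show ∀ ε : ℝ, {x : ℝ | id x ≤ ε} = Iic ε from fun _ ↦ rfl] using! h.rpow_isBigO
  integrable_rpow_neg s hs := (h.integrable_rpow_neg s hs).comp_aemeasurable hX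

lemma rpow (h : HasLowerTailOrder X μ d) {q : ℝ} (hq : 0 < q) :
    HasLowerTailOrder (fun ω ↦ X ω ^ q) μ (d / q) where
  aemeasurable := h.aemeasurable.pow_const q
  ae_pos := h.ae_pos.mono fun _ hω ↦ rpow_pos_of_pos hω q
  rpow_isBigO := by
    refine (h.rpow_isBigO.comp_tendsto (tendsto_rpow_nhdsGT_zero (inv_pos.2 hq))).congr' ?_ ?_
    · filter_upwards [self_mem_nhdsWithin] with ε (hε : 0 < ε)
      simp only [Function.comp_apply]
      rw [← rpow_mul hε.le, inv_mul_eq_div]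
    · filter_upwards [self_mem_nhdsWithin] with ε (hε : 0 < ε)
      refine measureReal_congr (h.ae_pos.mono fun ω hω ↦ propext ?_)
      exact le_rpow_inv_iff_of_pos hω.le hε.le hq
  integrable_rpow_neg s hs := by
    have hqs : q * s ∈ Ioo 0 d := ⟨mul_pos hq hs.1, (lt_div_iff₀' hq).1 hs.2⟩
    refine (h.integrable_rpow_neg _ hqs).congr (h.ae_pos.mono fun ω hω ↦ ?_)
    simp only [← rpow_mul hω.le, mul_neg]

-- The product is at most `ε` once each of its `n` factors is at most `ε ^ (1 / n)`.
lemma isBigO_measureReal_prod_le {ι : Type*} [Fintype ι] [Nonempty ι] {X : ι → Ω → ℝ}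
    (hindep : iIndepFun X μ) (h : ∀ i, HasLowerTailOrder (X i) μ d) :
    (fun ε ↦ ε ^ d) =O[𝓝[>] 0] fun ε ↦ μ.real {ω | ∏ i, X i ω ≤ ε} := by
  have := hindep.isProbabilityMeasure
  have hn : (0 : ℝ) < Fintype.card ι := by exact_mod_cast Fintype.card_pos
  have hroot := tendsto_rpow_nhdsGT_zero (inv_pos.2 hn)
  have hprod := (IsBigO.finsetProd fun i (_ : i ∈ Finset.univ) ↦
    (h i).rpow_isBigO).comp_tendsto hroot
  refine (hprod.congr' ?_ EventuallyEq.rfl).trans (IsBigO.of_norm_eventuallyLE ?_)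
  · filter_upwards [self_mem_nhdsWithin] with ε (hε : 0 < ε)
    simp only [Function.comp_apply, Finset.prod_const, Finset.card_univ]
    rw [rpow_pow_comm (by positivity), rpow_inv_natCast_pow hε.le Fintype.card_ne_zero]
  · filter_upwards [self_mem_nhdsWithin] with ε (hε : 0 < ε)
    have hinter : ∏ i, μ.real {ω | X i ω ≤ ε ^ (Fintype.card ι : ℝ)⁻¹} =
        μ.real (⋂ i, {ω | X i ω ≤ ε ^ (Fintype.card ι : ℝ)⁻¹}) := by
      simp only [measureReal_def, ← ENNReal.toReal_prod]
      exact congrArg ENNReal.toReal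
        (hindep.meas_iInter fun i ↦ ⟨Iic _, measurableSet_Iic, rfl⟩).symm
    simp only [Function.comp_apply]
    rw [hinter, norm_of_nonneg measureReal_nonneg]
    refine ENNReal.toReal_mono (measure_ne_top _ _) (measure_mono_ae ?_)
    filter_upwards [ae_all_iff.2 fun i ↦ (h i).ae_pos] with ω hpos hle
    calc ∏ i, X i ω ≤ ∏ _i : ι, ε ^ (Fintype.card ι : ℝ)⁻¹ :=
          Finset.prod_le_prod (fun i _ ↦ (hpos i).le) fun i _ ↦ mem_iInter.1 hle i
      _ = ε := by
        rw [Finset.prod_const, Finset.card_univ, rpow_inv_natCast_pow hε.le Fintype.card_ne_zero]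

lemma integrable_prod_rpow_neg {ι : Type*} [Fintype ι] {X : ι → Ω → ℝ}
    (hindep : iIndepFun X μ) (h : ∀ i, HasLowerTailOrder (X i) μ d) (s : ℝ) (hs : s ∈ Ioo 0 d) :
    Integrable (fun ω ↦ (∏ i, X i ω) ^ (-s)) μ := by
  have := hindep.isProbabilityMeasure
  have hlaw := hindep.map_fun_eq_pi_map fun i ↦ (h i).aemeasurable
  have hmarginal (i : ι) : Integrable (fun x : ℝ ↦ x ^ (-s)) (μ.map (X i)) :=
    (integrable_map_measure (by fun_prop) (h i).aemeasurable).2 ((h i).integrable_rpow_neg s hs)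
  have := fun i ↦ Measure.isProbabilityMeasure_map (h i).aemeasurable
  have hjoint := Integrable.fintype_prod_dep hmarginal
  rw [← hlaw] at hjoint
  refine (hjoint.comp_aemeasurable (aemeasurable_pi_lambda _ fun i ↦ (h i).aemeasurable)).congr ?_
  filter_upwards [ae_all_iff.2 fun i ↦ (h i).ae_pos] with ω hω
  exact finsetProd_rpow _ _ (fun i _ ↦ (hω i).le) _

lemma prod {ι : Type*} [Fintype ι] [Nonempty ι] {X : ι → Ω → ℝ}
    (hindep : iIndepFun X μ) (h : ∀ i, HasLowerTailOrder (X i) μ d) :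
    HasLowerTailOrder (fun ω ↦ ∏ i, X i ω) μ d where
  aemeasurable := Finset.aemeasurable_fun_prod _ fun i _ ↦ (h i).aemeasurable
  ae_pos := (ae_all_iff.2 fun i ↦ (h i).ae_pos).mono fun _ hω ↦
    Finset.prod_pos fun i _ ↦ hω i
  rpow_isBigO := isBigO_measureReal_prod_le hindep h
  integrable_rpow_neg := integrable_prod_rpow_neg hindep h

section Expectation

variable [IsFiniteMeasure μ] {F : ℝ → ℝ}

lemma integrable_antitone_comp_mul (h : HasLowerTailOrder X μ d) (hF : Antitone F)
    (hF0 : ∀ x, 0 ≤ F x) {ρ : ℝ} (hρ : 0 ≤ ρ) : Integrable (fun ω ↦ F (X ω * ρ)) μ := by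
  refine Integrable.of_bound (hF.measurable.comp_aemeasurable
    (h.aemeasurable.mul_const ρ)).aestronglyMeasurable (F 0) ?_
  filter_upwards [h.ae_pos] with ω hω
  rw [norm_of_nonneg (hF0 _)]
  exact hF (by positivity)

lemma rpow_neg_isBigO_integral (h : HasLowerTailOrder X μ d) (hF : Antitone F)
    (hF0 : ∀ x, 0 < F x) :
    (fun ρ ↦ ρ ^ (-d)) =O[atTop] fun ρ ↦ ∫ ω, F (X ω * ρ) ∂μ := by
  refine ((h.rpow_isBigO.comp_tendsto tendsto_inv_atTop_nhdsGT_zero).congr' ?_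
    EventuallyEq.rfl).trans (IsBigO.of_bound (F 1)⁻¹ ?_)
  · filter_upwards [eventually_gt_atTop 0] with ρ hρ
    simp only [Function.comp_apply]
    rw [inv_rpow hρ.le, rpow_neg hρ.le]
  · filter_upwards [eventually_gt_atTop 0] with ρ hρ
    have hsub : {ω | X ω ≤ ρ⁻¹} ⊆ {ω | F 1 ≤ F (X ω * ρ)} := fun ω hω ↦
      hF ((le_div_iff₀ hρ).1 (by rwa [one_div]))
    have hmarkov := mul_meas_ge_le_integral_of_nonneg (ae_of_all μ fun ω ↦ (hF0 (X ω * ρ)).le)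
      (h.integrable_antitone_comp_mul hF (fun x ↦ (hF0 x).le) hρ.le) (F 1)
    simp only [Function.comp_apply]
    rw [norm_of_nonneg measureReal_nonneg, ← div_eq_inv_mul, le_div_iff₀' (hF0 1)]
    calc F 1 * μ.real {ω | X ω ≤ ρ⁻¹} ≤ F 1 * μ.real {ω | F 1 ≤ F (X ω * ρ)} :=
          mul_le_mul_of_nonneg_left (measureReal_mono hsub) (hF0 1).le
      _ ≤ ‖∫ ω, F (X ω * ρ) ∂μ‖ := hmarkov.trans (le_norm_self _)

lemma integral_isBigO_rpow_neg (h : HasLowerTailOrder X μ d) (hF : Antitone F)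
    (hF0 : ∀ x, 0 ≤ F x) {s A : ℝ} (hs : s ∈ Ioo 0 d)
    (hdecay : ∀ x, 0 < x → F x ≤ A * x ^ (-s)) :
    (fun ρ ↦ ∫ ω, F (X ω * ρ) ∂μ) =O[atTop] fun ρ ↦ ρ ^ (-s) := by
  refine IsBigO.of_bound (A * ∫ ω, X ω ^ (-s) ∂μ) ?_
  filter_upwards [eventually_gt_atTop 0] with ρ hρ
  rw [norm_of_nonneg (integral_nonneg fun ω ↦ hF0 _), norm_of_nonneg (by positivity)]
  calc ∫ ω, F (X ω * ρ) ∂μ ≤ ∫ ω, A * ρ ^ (-s) * X ω ^ (-s) ∂μ := by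
        refine integral_mono_ae (h.integrable_antitone_comp_mul hF hF0 hρ.le)
          ((h.integrable_rpow_neg s hs).const_mul _) ?_
        filter_upwards [h.ae_pos] with ω hω
        have := hdecay _ (mul_pos hω hρ)
        rw [mul_rpow hω.le hρ.le] at this
        linarith
    _ = A * (∫ ω, X ω ^ (-s) ∂μ) * ρ ^ (-s) := by
        rw [integral_const_mul]
        ring

theorem hasDiversityOrder_integral (h : HasLowerTailOrder X μ d) (hd : 0 < d)
    (hF : Antitone F) (hF0 : ∀ x, 0 < F x)
    (hdecay : ∀ s ∈ Ioo 0 d, ∃ A, ∀ x, 0 < x → F x ≤ A * x ^ (-s)) :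
    HasDiversityOrder (fun ρ ↦ ∫ ω, F (X ω * ρ) ∂μ) d :=
  .of_isBigO hd (h.rpow_neg_isBigO_integral hF hF0) fun s hs ↦
    (hdecay s hs).elim fun _ hA ↦ h.integral_isBigO_rpow_neg hF (fun x ↦ (hF0 x).le) hs hA

end Expectation

end HasLowerTailOrder

section GammaMeasure

variable {a r : ℝ}

lemma gammaMeasure_eq_withDensity_restrict (a r : ℝ) :
    gammaMeasure a r = (volume.restrict (Ioi 0)).withDensity (gammaPDF a r) := by
  rw [gammaMeasure, Measure.restrict_congr_set Ioi_ae_eq_Ici,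
    ← withDensity_indicator measurableSet_Ici, indicator_eq_self.2]
  intro x hx
  by_contra hneg
  exact hx (gammaPDF_of_neg (not_le.1 hneg))

lemma withDensity_nakagamiPowerDensity (m : ℝ) :
    volume.withDensity (fun x ↦ ENNReal.ofReal (nakagamiPowerDensity m x)) =
      gammaMeasure m m := by
  rw [gammaMeasure_eq_withDensity_restrict, ← withDensity_indicator measurableSet_Ioi]
  congr 1 with x
  by_cases hx : 0 < x
  · rw [indicator_of_mem (mem_Ioi.2 hx), gammaPDF_of_nonneg hx.le, nakagamiPowerDensity, if_pos hx]
    ring_nf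
  · rw [indicator_of_notMem (by simpa using hx), nakagamiPowerDensity, if_neg hx,
      ENNReal.ofReal_zero]

lemma ae_pos_gammaMeasure (a r : ℝ) : ∀ᵐ x ∂gammaMeasure a r, 0 < x := by
  rw [gammaMeasure_eq_withDensity_restrict]
  exact (withDensity_absolutelyContinuous _ _).ae_le (ae_restrict_mem measurableSet_Ioi)

lemma measurable_gammaPDF (a r : ℝ) : Measurable (gammaPDF a r) :=
  (measurable_gammaPDFReal a r).ennreal_ofReal

lemma integrable_gammaPDFReal (ha : 0 < a) (hr : 0 < r) : Integrable (gammaPDFReal a r) := by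
  refine ⟨(measurable_gammaPDFReal a r).aestronglyMeasurable, ?_⟩
  rw [hasFiniteIntegral_iff_ofReal (ae_of_all _ (gammaPDFReal_nonneg ha hr))]
  exact (lintegral_gammaPDF_eq_one ha hr).trans_lt ENNReal.one_lt_top

lemma measureReal_gammaMeasure (ha : 0 < a) (hr : 0 < r) {s : Set ℝ} (hs : MeasurableSet s) :
    (gammaMeasure a r).real s = ∫ x in s, gammaPDFReal a r x := by
  rw [gammaMeasure, measureReal_def, withDensity_apply _ hs, integral_eq_lintegral_of_nonneg_ae
    (ae_of_all _ (gammaPDFReal_nonneg ha hr)) (by fun_prop)]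
  rfl

lemma measureReal_Ioi_gammaMeasure_pos (ha : 0 < a) (hr : 0 < r) (x : ℝ) :
    0 < (gammaMeasure a r).real (Ioi x) := by
  have := isProbabilityMeasure_gammaMeasure ha hr
  refine ENNReal.toReal_pos (fun hzero ↦ ?_) (measure_ne_top _ _)
  rw [gammaMeasure, withDensity_apply_eq_zero (measurable_gammaPDF a r)] at hzero
  have hsub : Ioi (max 0 x) ⊆ {y | gammaPDF a r y ≠ 0} ∩ Ioi x := by
    intro y hy
    obtain ⟨hy0, hxy⟩ := max_lt_iff.1 (mem_Ioi.1 hy)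
    exact ⟨(ENNReal.ofReal_pos.2 (gammaPDFReal_pos ha hr hy0)).ne', hxy⟩
  simpa using measure_mono_null hsub hzero

lemma integrable_rpow_gammaMeasure (ha : 0 < a) (hr : 0 < r) {s : ℝ} (hs : -a < s) :
    Integrable (fun x ↦ x ^ s) (gammaMeasure a r) := by
  rw [gammaMeasure_eq_withDensity_restrict, integrable_withDensity_iff_integrable_smul'
    (measurable_gammaPDF a r) (ae_of_all _ fun _ ↦ ENNReal.ofReal_lt_top)]
  have hint := (integrableOn_rpow_mul_exp_neg_mul_rpow (s := a + s - 1) (by linarith) one_pos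
    hr).const_mul (r ^ a / Gamma a)
  refine IntegrableOn.congr_fun hint (fun x (hx : 0 < x) ↦ ?_) measurableSet_Ioi
  rw [gammaPDF, ENNReal.toReal_ofReal (gammaPDFReal_nonneg ha hr x), gammaPDFReal, if_pos hx.le,
    smul_eq_mul, rpow_one, show a + s - 1 = a - 1 + s by ring, rpow_add hx, neg_mul]
  ring

lemma mul_rpow_le_gammaPDFReal (ha : 0 < a) (hr : 0 < r) {x : ℝ} (hx : x ∈ Ioc 0 1) :
    r ^ a / Gamma a * exp (-r) * x ^ (a - 1) ≤ gammaPDFReal a r x := by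
  have hx0 : 0 < x := hx.1
  rw [gammaPDFReal, if_pos hx0.le, mul_right_comm]
  gcongr
  exact mul_le_of_le_one_right hr.le hx.2

lemma rpow_isBigO_measureReal_Iic_gammaMeasure (ha : 0 < a) (hr : 0 < r) :
    (fun ε ↦ ε ^ a) =O[𝓝[>] 0] fun ε ↦ (gammaMeasure a r).real (Iic ε) := by
  have := isProbabilityMeasure_gammaMeasure ha hr
  set K := r ^ a / Gamma a * exp (-r)
  have hKpos : 0 < K := by positivity
  refine IsBigO.of_bound (a / K) ?_
  filter_upwards [Ioc_mem_nhdsGT one_pos] with ε hε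
  have hε0 : 0 < ε := hε.1
  have hlower : K * (ε ^ a / a) ≤ (gammaMeasure a r).real (Iic ε) := calc
    K * (ε ^ a / a) = ∫ x in (0 : ℝ)..ε, K * x ^ (a - 1) := by
      rw [intervalIntegral.integral_const_mul, integral_rpow (Or.inl (by linarith)),
        sub_add_cancel, zero_rpow ha.ne', sub_zero]
    _ ≤ ∫ x in (0 : ℝ)..ε, gammaPDFReal a r x := by
      refine intervalIntegral.integral_mono_on_of_le_Ioo hε0.le
        ((intervalIntegral.intervalIntegrable_rpow' (by linarith)).const_mul K)
        (integrable_gammaPDFReal ha hr).intervalIntegrable fun x hx ↦ ?_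
      exact mul_rpow_le_gammaPDFReal ha hr ⟨hx.1, hx.2.le.trans hε.2⟩
    _ = (gammaMeasure a r).real (Ioc 0 ε) := by
      rw [intervalIntegral.integral_of_le hε0.le, measureReal_gammaMeasure ha hr measurableSet_Ioc]
    _ ≤ (gammaMeasure a r).real (Iic ε) := measureReal_mono Ioc_subset_Iic_self
  rw [norm_of_nonneg (by positivity), norm_of_nonneg measureReal_nonneg, div_mul_eq_mul_div,
    le_div_iff₀ hKpos]
  rw [mul_div_assoc', div_le_iff₀ ha] at hlower
  linarith

lemma hasLowerTailOrder_id_gammaMeasure (ha : 0 < a) (hr : 0 < r) :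
    HasLowerTailOrder id (gammaMeasure a r) a where
  aemeasurable := aemeasurable_id
  ae_pos := ae_pos_gammaMeasure a r
  rpow_isBigO := rpow_isBigO_measureReal_Iic_gammaMeasure ha hr
  integrable_rpow_neg _ hs := integrable_rpow_gammaMeasure ha hr (neg_lt_neg hs.2)

lemma normGammaBar_mul (ha : 0 < a) (hr : 0 < r) {x : ℝ} (hx : 0 ≤ x) :
    normGammaBar a (r * x) = (gammaMeasure a r).real (Ioi x) := by
  have hpdf : ∀ t ∈ Ioi x,
      gammaPDFReal a r t = r / Gamma a * ((r * t) ^ (a - 1) * exp (-(r * t))) := by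
    intro t ht
    have ht0 : 0 ≤ t := hx.trans (le_of_lt ht)
    rw [gammaPDFReal, if_pos ht0, mul_rpow hr.le ht0, rpow_sub_one hr.ne']
    field_simp
  rw [measureReal_gammaMeasure ha hr measurableSet_Ioi,
    setIntegral_congr_fun measurableSet_Ioi hpdf, integral_const_mul,
    integral_comp_mul_left_Ioi (fun t ↦ t ^ (a - 1) * exp (-t)) x hr, normGammaBar, smul_eq_mul]
  field_simp

end GammaMeasure

lemma measureReal_Ioi_le_mul_rpow_neg {ν : Measure ℝ} [IsFiniteMeasure ν]
    (hν : ∀ᵐ z ∂ν, 0 ≤ z) {s : ℝ} (hs : 0 ≤ s) (hint : Integrable (fun z ↦ z ^ s) ν)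
    {x : ℝ} (hx : 0 < x) : ν.real (Ioi x) ≤ (∫ z, z ^ s ∂ν) * x ^ (-s) := by
  have hsub : Ioi x ⊆ {z | x ^ s ≤ z ^ s} := fun z hz ↦
    rpow_le_rpow hx.le (le_of_lt hz) hs
  have hmarkov := mul_meas_ge_le_integral_of_nonneg (hν.mono fun z hz ↦ rpow_nonneg hz s) hint
    (x ^ s)
  rw [rpow_neg hx.le, ← div_eq_mul_inv, le_div_iff₀' (by positivity)]
  exact (mul_le_mul_of_nonneg_left (measureReal_mono hsub) (by positivity)).trans hmarkov

/-- The probability that the largest of `L` independent samples from `ν` exceeds `x`. When `ν` is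
the law of the normalized noise energy of one frame, this is the frame error bound conditional on
the fading gains. -/
noncomputable def maxTail (ν : Measure ℝ) (L : ℕ) (x : ℝ) : ℝ :=
  1 - (1 - ν.real (Ioi x)) ^ L

namespace maxTail

variable {ν : Measure ℝ} [IsProbabilityMeasure ν] {L : ℕ}

lemma antitone (ν : Measure ℝ) [IsProbabilityMeasure ν] (L : ℕ) : Antitone (maxTail ν L) := by
  intro x y hxy
  have hle : ν.real (Ioi x) ≤ 1 := measureReal_le_one
  have hmono : ν.real (Ioi y) ≤ ν.real (Ioi x) := measureReal_mono (Ioi_subset_Ioi hxy)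
  unfold maxTail
  gcongr

lemma nonneg (x : ℝ) : 0 ≤ maxTail ν L x :=
  sub_nonneg.2 (pow_le_one₀ (sub_nonneg.2 measureReal_le_one)
    (sub_le_self 1 measureReal_nonneg))

lemma le_one (x : ℝ) : maxTail ν L x ≤ 1 :=
  sub_le_self 1 (pow_nonneg (sub_nonneg.2 measureReal_le_one) L)

lemma integrable_comp {Ω : Type*} [MeasurableSpace Ω] {μ : Measure Ω} [IsFiniteMeasure μ]
    {Y : Ω → ℝ} (hY : AEMeasurable Y μ) : Integrable (fun ω ↦ maxTail ν L (Y ω)) μ := by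
  refine .of_bound ((antitone ν L).measurable.comp_aemeasurable hY).aestronglyMeasurable 1 ?_
  refine ae_of_all _ fun ω ↦ ?_
  rw [norm_of_nonneg (nonneg _)]
  exact le_one _

lemma pos {x : ℝ} (hL : L ≠ 0) (hx : 0 < ν.real (Ioi x)) : 0 < maxTail ν L x :=
  sub_pos.2 (pow_lt_one₀ (sub_nonneg.2 measureReal_le_one) (sub_lt_self 1 hx) hL)

lemma le_mul_measureReal_Ioi (x : ℝ) : maxTail ν L x ≤ L * ν.real (Ioi x) := by
  have hle : ν.real (Ioi x) ≤ 1 := measureReal_le_one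
  have hbernoulli := one_add_mul_le_pow (by linarith : -2 ≤ -ν.real (Ioi x)) L
  rw [← sub_eq_add_neg] at hbernoulli
  unfold maxTail
  linarith

lemma le_mul_rpow_neg (hν : ∀ᵐ z ∂ν, 0 ≤ z) {s : ℝ} (hs : 0 ≤ s)
    (hint : Integrable (fun z ↦ z ^ s) ν) {x : ℝ} (hx : 0 < x) :
    maxTail ν L x ≤ L * (∫ z, z ^ s ∂ν) * x ^ (-s) := by
  refine (le_mul_measureReal_Ioi x).trans ?_
  rw [mul_assoc]
  gcongr
  exact measureReal_Ioi_le_mul_rpow_neg hν hs hint hx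

end maxTail

lemma one_sub_integral_one_sub_normGammaBar_pow {Ω : Type*} [MeasurableSpace Ω] {μ : Measure Ω}
    [IsProbabilityMeasure μ] {a r : ℝ} (ha : 0 < a) (hr : 0 < r) (L : ℕ) {Y : Ω → ℝ}
    (hY : AEMeasurable Y μ) (hY0 : ∀ᵐ ω ∂μ, 0 ≤ Y ω) :
    1 - ∫ ω, (1 - normGammaBar a (r * Y ω)) ^ L ∂μ =
      ∫ ω, maxTail (gammaMeasure a r) L (Y ω) ∂μ := by
  have := isProbabilityMeasure_gammaMeasure ha hr
  have hbar : (fun ω ↦ (1 - normGammaBar a (r * Y ω)) ^ L) =ᵐ[μ]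
      fun ω ↦ 1 - maxTail (gammaMeasure a r) L (Y ω) := by
    filter_upwards [hY0] with ω hω
    rw [normGammaBar_mul ha hr hω, maxTail, sub_sub_cancel]
  rw [integral_congr_ae hbar, integral_sub (integrable_const 1) (maxTail.integrable_comp hY),
    integral_const, probReal_univ, one_smul, sub_sub_cancel]

lemma hasDiversityOrder_integral_maxTail_gammaMeasure {Ω : Type*} [MeasurableSpace Ω]
    {μ : Measure Ω} [IsFiniteMeasure μ] {X : Ω → ℝ} {d : ℝ} (hX : HasLowerTailOrder X μ d)
    (hd : 0 < d) {a r : ℝ} (ha : 0 < a) (hr : 0 < r) {L : ℕ} (hL : L ≠ 0) :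
    HasDiversityOrder (fun ρ ↦ ∫ ω, maxTail (gammaMeasure a r) L (X ω * ρ) ∂μ) d := by
  have := isProbabilityMeasure_gammaMeasure ha hr
  refine hX.hasDiversityOrder_integral hd (maxTail.antitone _ L)
    (fun x ↦ maxTail.pos hL (measureReal_Ioi_gammaMeasure_pos ha hr x)) fun s hs ↦ ⟨_, fun x hx ↦
    maxTail.le_mul_rpow_neg ((ae_pos_gammaMeasure a r).mono fun _ hz ↦ hz.le) hs.1.le
      (integrable_rpow_gammaMeasure ha hr ?_) hx⟩
  linarith [hs.1]

/-- The sphere lower bound on the error probability in a Nakagami-`m` block-fading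
channel with `N` fading blocks has diversity order `d = m N` for any `L ≥ 1`. -/
theorem slb_diversity_order
    {Ω : Type*} [MeasureSpace Ω] [IsProbabilityMeasure (ℙ : Measure Ω)]
    (m : ℝ) (hm : 0 < m) (N L : ℕ) (hN : 1 ≤ N) (hL : 1 ≤ L)
    (γ : Fin N → Ω → ℝ)
    (hmeas : ∀ i, Measurable (γ i))
    (hindep : iIndepFun γ ℙ)
    (hlaw : ∀ i, Measure.map (γ i) ℙ
      = volume.withDensity (fun x => ENNReal.ofReal (nakagamiPowerDensity m x)))
    (Rsq : Ω → ℝ)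
    (hRsq : ∀ ω, Rsq ω = (1 / Real.pi) * Real.Gamma ((N : ℝ) / 2 + 1) ^ ((2 : ℝ) / N)
        * (∏ i, γ i ω) ^ ((1 : ℝ) / N))
    (Pslb : ℝ → ℝ)
    (hPslb : ∀ ρ, Pslb ρ
      = 1 - ∫ ω, (1 - normGammaBar ((N : ℝ) / 2) (Rsq ω * ρ / 2)) ^ L ∂ℙ) :
    Tendsto (fun ρ => - Real.log (Pslb ρ) / Real.log ρ) atTop (nhds (m * N)) := by
  have hN0 : (0 : ℝ) < N := by exact_mod_cast hN
  have : Nonempty (Fin N) := ⟨⟨0, hN⟩⟩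
  have hγ (i : Fin N) : HasLowerTailOrder (γ i) ℙ m := by
    refine .of_map (hmeas i).aemeasurable ?_
    rw [hlaw i, withDensity_nakagamiPowerDensity]
    exact hasLowerTailOrder_id_gammaMeasure hm hm
  have hG : HasLowerTailOrder (fun ω ↦ (∏ i, γ i ω) ^ ((1 : ℝ) / N)) ℙ (m * N) := by
    simpa using (HasLowerTailOrder.prod hindep hγ).rpow (one_div_pos.2 hN0)
  set r : ℝ := 1 / π * Gamma ((N : ℝ) / 2 + 1) ^ ((2 : ℝ) / N) / 2
  have hr : 0 < r := by positivity
  have hRsqρ (ω : Ω) (ρ : ℝ) : Rsq ω * ρ / 2 = r * ((∏ i, γ i ω) ^ ((1 : ℝ) / N) * ρ) := by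
    rw [hRsq]
    ring
  refine (hasDiversityOrder_integral_maxTail_gammaMeasure hG (by positivity) (half_pos hN0) hr
    (Nat.one_le_iff_ne_zero.1 hL)).congr' ?_
  filter_upwards [eventually_ge_atTop 0] with ρ hρ
  rw [hPslb]
  simp only [hRsqρ]
  exact (one_sub_integral_one_sub_normGammaBar_pow (half_pos hN0) hr L
    (hG.aemeasurable.mul_const ρ) (hG.ae_pos.mono fun ω hω ↦ by positivity)).symm
end

section
/- Let N ≥ 1, let μ be the Gaussian measure on ℝ^N with density p(z) = (2πσ²)^(−N/2) exp(−‖z‖²/(2σ²)) with respect to Lebesgue measure (σ > 0), and let B be the closed Euclidean ball of radius R > 0 centered at the origin. Then for every Lebesgue-measurable set V ⊆ ℝ^N whose Lebesgue measure equals that of B, one has μ(ℝ^N \ V) ≥ μ(ℝ^N \ B); i.e., among all sets of a given volume, the origin-centered ball minimizes the Gaussian probability of its complement. -/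
open MeasureTheory Set

/-! A radially decreasing density is at most its value `c` on the sphere `∂B` throughout `V \ B`,
and at least `c` throughout `B \ V`, while `vol (V \ B) ≤ vol (B \ V)` because the volumes differ
only off `V ∩ B`. Hence `μ (V \ B) ≤ c * vol (V \ B) ≤ c * vol (B \ V) ≤ μ (B \ V)`, and adding
`μ (V ∪ B)ᶜ` to both ends compares the complements. -/

section MeasurableSpace

variable {α : Type*} [MeasurableSpace α] {μ : Measure α} {s t : Set α}

theorem measure_sdiff_le_measure_sdiff_of_le (ht : MeasurableSet t) (hfin : μ (s ∩ t) ≠ ⊤)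
    (hle : μ s ≤ μ t) : μ (s \ t) ≤ μ (t \ s) := by
  refine (ENNReal.add_le_add_iff_left hfin).1 ?_
  calc μ (s ∩ t) + μ (s \ t) = μ s := measure_inter_add_sdiff s ht
    _ ≤ μ t := hle
    _ ≤ μ (t ∩ s) + μ (t \ s) := measure_le_inter_add_sdiff μ t s
    _ = μ (s ∩ t) + μ (t \ s) := by rw [inter_comm]

theorem measure_compl_le_measure_compl_of_sdiff_le (ht : MeasurableSet t)
    (hle : μ (s \ t) ≤ μ (t \ s)) : μ tᶜ ≤ μ sᶜ := by
  calc μ tᶜ ≤ μ (tᶜ ∩ s) + μ (tᶜ \ s) := measure_le_inter_add_sdiff μ tᶜ s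
    _ = μ (s \ t) + μ (sᶜ \ t) := by
        rw [← sdiff_eq_compl_inter, sdiff_eq tᶜ, inter_comm, ← sdiff_eq]
    _ ≤ μ (t \ s) + μ (sᶜ \ t) := by gcongr
    _ = μ sᶜ := by rw [sdiff_eq_compl_inter, measure_inter_add_sdiff sᶜ ht]

variable {f : α → ENNReal} {c : ENNReal}

theorem withDensity_apply_le_mul_measure (hs : MeasurableSet s) (hf : ∀ x ∈ s, f x ≤ c) :
    μ.withDensity f s ≤ c * μ s := by
  rw [withDensity_apply f hs, ← setLIntegral_const]
  exact setLIntegral_mono' hs hf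

theorem mul_measure_le_withDensity_apply (hs : MeasurableSet s) (hf : ∀ x ∈ s, c ≤ f x) :
    c * μ s ≤ μ.withDensity f s := by
  rw [withDensity_apply f hs, ← setLIntegral_const]
  exact setLIntegral_mono' hs hf

theorem withDensity_compl_le_withDensity_compl (ht : MeasurableSet t) (hfin : μ s ≠ ⊤)
    (hle : μ s ≤ μ t) (hf_compl : ∀ x ∈ tᶜ, f x ≤ c) (hf : ∀ x ∈ t, c ≤ f x) :
    μ.withDensity f tᶜ ≤ μ.withDensity f sᶜ := by
  wlog hs : MeasurableSet s generalizing s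
  · calc μ.withDensity f tᶜ ≤ μ.withDensity f (toMeasurable μ s)ᶜ :=
          this (by rwa [measure_toMeasurable]) (by rwa [measure_toMeasurable])
            (measurableSet_toMeasurable μ s)
      _ ≤ μ.withDensity f sᶜ :=
          measure_mono (compl_subset_compl.2 (subset_toMeasurable μ s))
  have hfin_inter : μ (s ∩ t) ≠ ⊤ := measure_ne_top_of_subset inter_subset_left hfin
  apply measure_compl_le_measure_compl_of_sdiff_le ht
  calc μ.withDensity f (s \ t) ≤ c * μ (s \ t) :=
        withDensity_apply_le_mul_measure (hs.diff ht) fun x hx => hf_compl x hx.2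
    _ ≤ c * μ (t \ s) := by
        gcongr c * ?_
        exact measure_sdiff_le_measure_sdiff_of_le ht hfin_inter hle
    _ ≤ μ.withDensity f (t \ s) :=
        mul_measure_le_withDensity_apply (ht.diff hs) fun x hx => hf x hx.1

end MeasurableSpace

theorem gaussian_complement_ball_min_general {X : Type*} [PseudoMetricSpace X] [MeasurableSpace X]
    [OpensMeasurableSpace X] {ν : Measure X} {g : ℝ → ENNReal} (hg : AntitoneOn g (Ici 0))
    (x : X) {R : ℝ} (hR : 0 ≤ R) {V : Set X} (hfin : ν V ≠ ⊤)
    (hvol : ν V ≤ ν (Metric.closedBall x R)) :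
    ν.withDensity (fun z => g (dist z x)) (Metric.closedBall x R)ᶜ ≤
      ν.withDensity (fun z => g (dist z x)) Vᶜ := by
  refine withDensity_compl_le_withDensity_compl (c := g R) Metric.isClosed_closedBall.measurableSet
    hfin hvol (fun z hz => ?_) fun z hz => hg dist_nonneg hR hz
  have hRz : R < dist z x := not_le.1 hz
  exact hg hR dist_nonneg hRz.le

theorem antitoneOn_ofReal_mul_exp_neg_sq_div {a : ℝ} (ha : 0 ≤ a) (σ : ℝ) :
    AntitoneOn (fun r : ℝ => ENNReal.ofReal (a * Real.exp (-r ^ 2 / (2 * σ ^ 2)))) (Ici 0) := by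
  intro r (hr : 0 ≤ r) t _ hrt
  dsimp only
  gcongr

/-- Among all measurable sets of a given volume in `ℝ^N`, the origin-centered
Euclidean ball minimizes the Gaussian probability of the complement: if `μ` is the
centered isotropic Gaussian measure with variance `σ²` per component and `V` has
the same Lebesgue measure as the closed ball `B` of radius `R` centered at `0`,
then `μ(ℝ^N \ V) ≥ μ(ℝ^N \ B)`. -/
theorem gaussian_complement_ball_min
    (N : ℕ) (hN : 1 ≤ N) (σ R : ℝ) (hσ : 0 < σ) (hR : 0 < R)
    (μ : Measure (EuclideanSpace ℝ (Fin N)))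
    (hμ : μ = volume.withDensity (fun z => ENNReal.ofReal
      ((2 * Real.pi * σ ^ 2) ^ (-(N : ℝ) / 2) * Real.exp (-‖z‖ ^ 2 / (2 * σ ^ 2)))))
    (V : Set (EuclideanSpace ℝ (Fin N))) (hV : MeasurableSet V)
    (hvol : volume V = volume (Metric.closedBall (0 : EuclideanSpace ℝ (Fin N)) R)) :
    μ (Metric.closedBall (0 : EuclideanSpace ℝ (Fin N)) R)ᶜ ≤ μ Vᶜ := by
  have hprofile := antitoneOn_ofReal_mul_exp_neg_sq_div
    (show 0 ≤ (2 * Real.pi * σ ^ 2) ^ (-(N : ℝ) / 2) by positivity) σ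
  simpa only [hμ, dist_zero_right] using gaussian_complement_ball_min_general hprofile 0 hR.le
    (hvol ▸ measure_closedBall_lt_top.ne) hvol.le
end
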